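/- arXiv:2008.00726 — 7 statements merged into one kernel-verified Lean document; each statement's English description precedes it below -/
import Mathlib

section
/- If φ₀ < 0 satisfies (1/N)·Σ_{m=1}^{M̄} K_m·γ_m/(γ_m − φ₀) = 1, then |φ₀| ≥ |K/N − 1| / ((1/N)·Σ_{m=1}^{M̄} K_m/γ_m), where K = Σ_{m=1}^{M̄} K_m. -/
open scoped BigOperators

/-- If `φ₀ < 0` satisfies `(1/N)·Σ_m K_m·γ_m/(γ_m − φ₀) = 1`, then
`|φ₀| ≥ |K/N − 1| / ((1/N)·Σ_m K_m/γ_m)`, where `K = Σ_m K_m`. -/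
theorem abs_phi0_lower_bound (Mbar : ℕ) (γ K : Fin Mbar → ℝ) (N : ℝ)
    (hγ : ∀ m, 0 < γ m) (hK : ∀ m, 0 < K m) (hN : 0 < N)
    (φ₀ : ℝ) (hφ₀ : φ₀ < 0)
    (heq : (1 / N) * ∑ m, K m * γ m / (γ m - φ₀) = 1) :
    |(∑ m, K m) / N - 1| / ((1 / N) * ∑ m, K m / γ m) ≤ |φ₀| := by
  have hS : 0 ≤ (1 / N) * ∑ m, K m / γ m :=
    mul_nonneg (by positivity)
      (Finset.sum_nonneg fun m _ => (div_pos (hK m) (hγ m)).le)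
  apply div_le_of_le_mul₀ hS (abs_nonneg _)
  have key : (∑ m, K m) / N - 1 = (1 / N) * ∑ m, K m * (-φ₀) / (γ m - φ₀) := by
    have hsum : ∑ m, K m * (-φ₀) / (γ m - φ₀)
        = ∑ m, K m - ∑ m, K m * γ m / (γ m - φ₀) := by
      rw [← Finset.sum_sub_distrib]
      refine Finset.sum_congr rfl fun m _ => ?_
      have h : γ m - φ₀ ≠ 0 := by
        have := hγ m
        exact ne_of_gt (by linarith)
      field_simp
      ring
    rw [hsum, mul_sub, heq]
    ring
  have hpos : ∀ m, 0 < γ m - φ₀ := fun m => by linarith [hγ m]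
  rw [key, abs_of_neg hφ₀, abs_of_nonneg]
  · rw [mul_left_comm, Finset.mul_sum (a := -φ₀)]
    apply mul_le_mul_of_nonneg_left _ (by positivity)
    refine Finset.sum_le_sum fun m _ => ?_
    have h1 : 0 ≤ K m * (-φ₀) := mul_nonneg (hK m).le (by linarith)
    calc K m * (-φ₀) / (γ m - φ₀) ≤ K m * (-φ₀) / γ m :=
          div_le_div_of_nonneg_left h1 (hγ m) (by linarith)
      _ = -φ₀ * (K m / γ m) := by ring
  · refine mul_nonneg (by positivity) (Finset.sum_nonneg fun m _ => ?_)
    exact div_nonneg (mul_nonneg (hK m).le (by linarith)) (hpos m).le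
end

section
/- If φ₀ < 0 satisfies (1/N)·Σ_{m=1}^{M̄} K_m·γ_m/(γ_m − φ₀) = 1, then (1/N)·Σ_{m=1}^{M̄} K_m·(γ_m/(γ_m − φ₀))² = 1 − |φ₀|·(1/N)·Σ_{m=1}^{M̄} K_m·γ_m/(γ_m − φ₀)², and in particular this quantity is strictly less than 1. -/
open scoped BigOperators

/-- If `φ₀ < 0` satisfies `(1/N)·Σ_m K_m·γ_m/(γ_m − φ₀) = 1`, then
`(1/N)·Σ_m K_m·(γ_m/(γ_m − φ₀))² = 1 − |φ₀|·(1/N)·Σ_m K_m·γ_m/(γ_m − φ₀)²`,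
and in particular this quantity is strictly less than `1`. -/
theorem trace_Q_sq_identity (Mbar : ℕ) (γ K : Fin Mbar → ℝ) (N : ℝ)
    (hγ : ∀ m, 0 < γ m) (hK : ∀ m, 0 < K m) (hN : 0 < N)
    (φ₀ : ℝ) (hφ₀ : φ₀ < 0)
    (heq : (1 / N) * ∑ m, K m * γ m / (γ m - φ₀) = 1) :
    (1 / N) * ∑ m, K m * (γ m / (γ m - φ₀)) ^ 2
      = 1 - |φ₀| * ((1 / N) * ∑ m, K m * γ m / (γ m - φ₀) ^ 2) ∧
    (1 / N) * ∑ m, K m * (γ m / (γ m - φ₀)) ^ 2 < 1 := by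
  have hd : ∀ m, 0 < γ m - φ₀ := fun m => by linarith [hγ m]
  have hsum : ∑ m, K m * (γ m / (γ m - φ₀)) ^ 2
      = ∑ m, K m * γ m / (γ m - φ₀) + φ₀ * ∑ m, K m * γ m / (γ m - φ₀) ^ 2 := by
    rw [Finset.mul_sum, ← Finset.sum_add_distrib]
    refine Finset.sum_congr rfl fun m _ => ?_
    have := (hd m).ne'
    field_simp
    ring
  have h1 : (1 / N) * ∑ m, K m * (γ m / (γ m - φ₀)) ^ 2
      = 1 - |φ₀| * ((1 / N) * ∑ m, K m * γ m / (γ m - φ₀) ^ 2) := by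
    rw [hsum, mul_add, heq, abs_of_neg hφ₀]
    ring
  refine ⟨h1, ?_⟩
  rw [h1]
  have hne : (Finset.univ : Finset (Fin Mbar)).Nonempty := by
    by_contra h
    rw [Finset.not_nonempty_iff_eq_empty] at h
    rw [h] at heq
    simp at heq
  have hpos : 0 < ∑ m, K m * γ m / (γ m - φ₀) ^ 2 :=
    Finset.sum_pos (fun m _ => div_pos (mul_pos (hK m) (hγ m)) (pow_pos (hd m) 2)) hne
  have : 0 < |φ₀| * ((1 / N) * ∑ m, K m * γ m / (γ m - φ₀) ^ 2) :=
    mul_pos (abs_pos.mpr hφ₀.ne) (mul_pos (one_div_pos.mpr hN) hpos)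
  linarith
end

section
/- Let W be an L×L real symmetric positive semidefinite matrix with entries satisfying 0 ≤ W_{ij} < 1, and define the L×L matrix G by G_{ij} = −W_{ij} − log(1 − W_{ij}). Then G = Σ_{n≥2} (1/n)·W^{∘n}, where W^{∘n} denotes the n-fold entrywise (Hadamard) product of W with itself, the matrix G − (1/2)·(W ∘ W) is positive semidefinite, and if W is positive definite then G is positive definite. -/
open scoped BigOperators
open Matrix

/-- Entrywise (Hadamard) `n`-th power of a matrix. -/
def hadamardPow {L : ℕ} (W : Matrix (Fin L) (Fin L) ℝ) (n : ℕ) :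
    Matrix (Fin L) (Fin L) ℝ :=
  Matrix.of fun i j => (W i j) ^ n

theorem hadamardPow_posSemidef {L : ℕ} {W : Matrix (Fin L) (Fin L) ℝ}
    (hW : W.PosSemidef) (n : ℕ) : (hadamardPow W (n + 1)).PosSemidef := by
  induction n with
  | zero =>
    have h : hadamardPow W (0 + 1) = W := by
      ext i j
      simp [hadamardPow]
    rw [h]
    exact hW
  | succ k ih =>
    have h : hadamardPow W (k + 1 + 1) = hadamardPow W (k + 1) ⊙ W := by
      ext i j
      simp [hadamardPow, pow_succ]
    rw [h]
    exact ih.hadamard hW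

theorem posSemidef_of_entry_hasSum {L : ℕ} {A : ℕ → Matrix (Fin L) (Fin L) ℝ}
    {B : Matrix (Fin L) (Fin L) ℝ} (hA : ∀ n, (A n).PosSemidef)
    (h : ∀ i j, HasSum (fun n => A n i j) (B i j)) : B.PosSemidef := by
  refine PosSemidef.of_dotProduct_mulVec_nonneg ?_ ?_
  · ext i j
    have h1 := h j i
    have h2 : (fun n => A n j i) = fun n => A n i j := by
      funext n
      simpa using (hA n).isHermitian.apply i j
    rw [h2] at h1
    simpa using h1.unique (h i j)
  · intro x
    have h1 : HasSum (fun n => star x ⬝ᵥ (A n *ᵥ x)) (star x ⬝ᵥ (B *ᵥ x)) := by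
      simp only [dotProduct, mulVec]
      exact hasSum_sum fun i _ => (hasSum_sum fun j _ => (h i j).mul_right _).mul_left _
    exact h1.nonneg fun n => (hA n).dotProduct_mulVec_nonneg x

theorem log_tail_hasSum {x : ℝ} (h0 : 0 ≤ x) (h1 : x < 1) :
    HasSum (fun n : ℕ => if 2 ≤ n then (1 / (n : ℝ)) * x ^ n else 0)
      (-x - Real.log (1 - x)) := by
  have h := Real.hasSum_pow_div_log_of_abs_lt_one (abs_lt.2 ⟨by linarith, h1⟩ : |x| < 1)
  rw [← hasSum_nat_add_iff' 1] at h
  rw [← hasSum_nat_add_iff' 2]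
  convert h using 1
  · funext n
    rw [if_pos (by omega)]
    push_cast
    ring
  · simp [Finset.sum_range_succ]
    ring

/-- Let `W` be an `L×L` real symmetric positive semidefinite matrix with entries in `[0,1)`,
and let `G` be the matrix with entries `G_{ij} = −W_{ij} − log(1 − W_{ij})`.  Then
`G = Σ_{n ≥ 2} (1/n)·W^{∘n}` (entrywise series of Hadamard powers), the matrix
`G − (1/2)·(W ∘ W)` is positive semidefinite, and if `W` is positive definite then so is `G`. -/
theorem hadamard_log_series_posdef (L : ℕ) (W : Matrix (Fin L) (Fin L) ℝ)
    (hW : W.PosSemidef)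
    (hW01 : ∀ i j, 0 ≤ W i j ∧ W i j < 1)
    (G : Matrix (Fin L) (Fin L) ℝ)
    (hG : ∀ i j, G i j = -W i j - Real.log (1 - W i j)) :
    (∀ i j, G i j = ∑' n : ℕ, if 2 ≤ n then (1 / (n : ℝ)) * hadamardPow W n i j else 0) ∧
    (G - (1 / 2 : ℝ) • (W ⊙ W)).PosSemidef ∧
    (W.PosDef → G.PosDef) := by
  have hs : ∀ i j, HasSum (fun n : ℕ => if 2 ≤ n then (1 / (n : ℝ)) * hadamardPow W n i j else 0)
      (G i j) := by
    intro i j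
    rw [hG]
    exact log_tail_hasSum (hW01 i j).1 (hW01 i j).2
  have hpsd : (G - (1 / 2 : ℝ) • (W ⊙ W)).PosSemidef := by
    refine posSemidef_of_entry_hasSum
      (A := fun n => (1 / ((n + 3 : ℕ) : ℝ)) • hadamardPow W (n + 2 + 1)) ?_ ?_
    · intro n
      exact (hadamardPow_posSemidef hW (n + 2)).smul (by positivity)
    · intro i j
      have h := (hasSum_nat_add_iff' 3).2 (hs i j)
      have e1 : (fun n : ℕ => ((1 / ((n + 3 : ℕ) : ℝ)) • hadamardPow W (n + 2 + 1)) i j) =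
          fun n : ℕ => if 2 ≤ n + 3 then (1 / ((n + 3 : ℕ) : ℝ)) * hadamardPow W (n + 3) i j
            else 0 := by
        funext n
        rw [if_pos (by omega)]
        simp
      have e2 : (G - (1 / 2 : ℝ) • (W ⊙ W)) i j = G i j - ∑ k ∈ Finset.range 3,
          if 2 ≤ k then (1 / (k : ℝ)) * hadamardPow W k i j else 0 := by
        simp [Finset.sum_range_succ, hadamardPow]
        ring
      rw [e2]
      exact e1 ▸ h
  refine ⟨fun i j => (hs i j).tsum_eq.symm, hpsd, fun hP => ?_⟩
  have h2 : ((1 / 2 : ℝ) • (W ⊙ W)).PosDef := (hP.hadamard hP).smul (by norm_num)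
  have h3 := h2.add_posSemidef hpsd
  rwa [add_sub_cancel] at h3
end

section
/- The following identity holds: ∏_{k≥1, φ_k≠0} (φ_k − φ₀) / ∏_{k=1}^{M̄} (γ_k − φ₀) equals (1/N)·Σ_{m=1}^{M̄} K_m·γ_m/(γ_m − φ₀)² when φ₀ ≠ 0, and equals (N − K)/N when φ₀ = 0. -/
open scoped BigOperators
open Finset

/-- Lemma 2 identity (eq:identyphis): with `φ₀ ≤ φ₁ ≤ … ≤ φ_{M̄}` the `M̄+1` real roots of
`φ·(1 − Φ(φ)) = 0`, expressed through the polynomial identity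
`∏_{k : φ_k ≠ 0} (φ_k − X) = ∏_k (γ_k − X) − (1/N)·Σ_m K_m γ_m ∏_{k≠m} (γ_k − X)`,
one has `∏_{k ≥ 1, φ_k ≠ 0} (φ_k − φ₀) / ∏_k (γ_k − φ₀)
  = (1/N)·Σ_m K_m γ_m/(γ_m − φ₀)²` when `φ₀ ≠ 0`, and `= (N − K)/N` when `φ₀ = 0`. -/
theorem ratio_of_root_products (Mbar : ℕ) (γ K : Fin Mbar → ℝ) (N : ℝ)
    (hγpos : ∀ m, 0 < γ m) (hγmono : StrictMono γ) (hK : ∀ m, 0 < K m)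
    (hN : 0 < N) (hKN : ∑ m, K m ≠ N)
    (φ : Fin (Mbar + 1) → ℝ) (hφmono : Monotone φ) (hφ₀ : φ 0 ≤ 0)
    (hpoly : ∀ X : ℝ,
      ∏ k ∈ univ.filter (fun k => φ k ≠ 0), (φ k - X) =
        ∏ k, (γ k - X) -
          (1 / N) * ∑ m, K m * γ m * ∏ k ∈ univ.erase m, (γ k - X)) :
    (φ 0 ≠ 0 →
      (∏ k ∈ univ.filter (fun k => k ≠ 0 ∧ φ k ≠ 0), (φ k - φ 0)) /
          ∏ k, (γ k - φ 0)
        = (1 / N) * ∑ m, K m * γ m / (γ m - φ 0) ^ 2) ∧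
    (φ 0 = 0 →
      (∏ k ∈ univ.filter (fun k => k ≠ 0 ∧ φ k ≠ 0), (φ k - φ 0)) /
          ∏ k, (γ k - φ 0)
        = (N - ∑ m, K m) / N) := by
  have hfac : ∀ (X : ℝ) (m : Fin Mbar),
      (γ m - X) * ∏ k ∈ univ.erase m, (γ k - X) = ∏ k, (γ k - X) := fun X m =>
    Finset.mul_prod_erase univ (fun k => γ k - X) (mem_univ m)
  have hpos : ∀ m, 0 < γ m - φ 0 := fun m => by linarith [hγpos m]
  have hP : 0 < ∏ k, (γ k - φ 0) := Finset.prod_pos fun m _ => hpos m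
  have hN' : N ≠ 0 := hN.ne'
  constructor
  · intro h0
    have hset : univ.filter (fun k => φ k ≠ 0)
        = insert 0 (univ.filter (fun k => k ≠ 0 ∧ φ k ≠ 0)) := by
      ext k
      by_cases hk : k = 0
      · simp [hk, h0]
      · simp [hk]
    have hsplit : ∀ X : ℝ, ∏ k ∈ univ.filter (fun k => φ k ≠ 0), (φ k - X)
        = (φ 0 - X) * ∏ k ∈ univ.filter (fun k => k ≠ 0 ∧ φ k ≠ 0), (φ k - X) := by
      intro X
      rw [hset, Finset.prod_insert (by simp)]
    have hE : ∀ m, ∏ k ∈ univ.erase m, (γ k - φ 0) = (∏ k, (γ k - φ 0)) / (γ m - φ 0) := by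
      intro m
      rw [eq_div_iff (hpos m).ne', mul_comm, hfac]
    have hΦ : (1 / N) * ∑ m, K m * γ m / (γ m - φ 0) = 1 := by
      have h := hpoly (φ 0)
      rw [hsplit, sub_self, zero_mul] at h
      have h2 : ∑ m, K m * γ m * ∏ k ∈ univ.erase m, (γ k - φ 0)
          = (∏ k, (γ k - φ 0)) * ∑ m, K m * γ m / (γ m - φ 0) := by
        rw [Finset.mul_sum]
        refine Finset.sum_congr rfl fun m _ => ?_
        rw [hE]; ring
      rw [h2] at h
      apply mul_left_cancel₀ hP.ne'
      linarith
    have hR : ∀ X : ℝ, (φ 0 - X) * ∏ k ∈ univ.filter (fun k => k ≠ 0 ∧ φ k ≠ 0), (φ k - X)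
        = (φ 0 - X) * ((1 / N) * ∑ m, K m * γ m / (γ m - φ 0) *
            ∏ k ∈ univ.erase m, (γ k - X)) := by
      intro X
      rw [← hsplit, hpoly]
      have : ∏ k, (γ k - X)
          = (1 / N) * ∑ m, K m * γ m / (γ m - φ 0) * ∏ k, (γ k - X) := by
        rw [← Finset.sum_mul, ← mul_assoc, hΦ, one_mul]
      rw [this, ← mul_sub, ← Finset.sum_sub_distrib, mul_left_comm, Finset.mul_sum univ _ (φ 0 - X)]
      congr 1
      refine Finset.sum_congr rfl fun m _ => ?_
      rw [← hfac X m]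
      have := (hpos m).ne'
      field_simp
      ring
    have hfun : (fun X : ℝ => ∏ k ∈ univ.filter (fun k => k ≠ 0 ∧ φ k ≠ 0), (φ k - X))
        = fun X : ℝ => (1 / N) * ∑ m, K m * γ m / (γ m - φ 0) *
            ∏ k ∈ univ.erase m, (γ k - X) := by
      refine Continuous.ext_on (dense_compl_singleton (φ 0)) (by fun_prop) (by fun_prop) ?_
      intro X hX
      exact mul_left_cancel₀ (sub_ne_zero.mpr (Ne.symm hX)) (hR X)
    have h := congrFun hfun (φ 0)
    rw [h, div_eq_iff hP.ne', mul_assoc, Finset.sum_mul]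
    congr 1
    refine Finset.sum_congr rfl fun m _ => ?_
    rw [hE]
    have := (hpos m).ne'
    field_simp
  · intro h0
    have hset : univ.filter (fun k => k ≠ 0 ∧ φ k ≠ 0) = univ.filter (fun k => φ k ≠ 0) := by
      ext k
      by_cases hk : k = 0
      · simp [hk, h0]
      · simp [hk]
    have h2 : ∑ m, K m * γ m * ∏ k ∈ univ.erase m, (γ k - φ 0)
        = (∑ m, K m) * ∏ k, (γ k - φ 0) := by
      rw [Finset.sum_mul]
      refine Finset.sum_congr rfl fun m _ => ?_
      rw [← hfac _ m, h0]; ring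
    rw [hset, hpoly, h2, div_eq_iff hP.ne']
    field_simp
end

section
/- The following two identities hold: (a) Σ_{r=1}^{M̄} ν_r = Σ_{r=1}^{M̄} γ_r − Σ_{r=1}^{M̄} κ̃_r·γ_r; and (b) for every j ∈ {1,…,M̄}, Σ_{i=1}^{M̄} κ̃_j·γ_j/(ν_i − γ_j) = Σ_{r≠j} κ̃_r·γ_r/(γ_r − γ_j) + Σ_{i≠j} κ̃_j·γ_j/(γ_i − γ_j) − 1. -/
open scoped BigOperators
open Finset

theorem hasDerivAt_prod_lin {ι : Type*} [DecidableEq ι] (s : Finset ι) (a b : ι → ℂ) (x : ℂ) :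
    HasDerivAt (fun Y : ℂ => ∏ i ∈ s, (a i - b i * Y))
      (∑ i ∈ s, (∏ k ∈ s.erase i, (a k - b k * x)) * (-(b i))) x := by
  have h := HasDerivAt.fun_finsetProd (u := s) (f := fun i (Y : ℂ) => a i - b i * Y)
    (f' := fun i => -(b i)) (x := x) (fun i _ => by
      simpa using ((hasDerivAt_id x).const_mul (b i)).const_sub (a i))
  simpa [smul_eq_mul] using h

theorem hasDerivAt_prod_sub {ι : Type*} [DecidableEq ι] (s : Finset ι) (a : ι → ℂ) (x : ℂ) :
    HasDerivAt (fun Y : ℂ => ∏ i ∈ s, (a i - Y))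
      (-∑ i ∈ s, ∏ k ∈ s.erase i, (a k - x)) x := by
  simpa using hasDerivAt_prod_lin s a (fun _ => 1) x

/-- If one factor vanishes at `x`, only one term of the derivative survives. -/
theorem sum_prod_erase_vanish {ι : Type*} [DecidableEq ι] (s : Finset ι) (a : ι → ℂ) (j : ι)
    (hj : j ∈ s) :
    ∑ i ∈ s, ∏ k ∈ s.erase i, (a k - a j) = ∏ k ∈ s.erase j, (a k - a j) := by
  refine Finset.sum_eq_single_of_mem j hj fun i _ hij => ?_
  exact Finset.prod_eq_zero (Finset.mem_erase.2 ⟨hij.symm, hj⟩) (sub_self _)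

theorem sum_prod_erase_div {ι : Type*} [DecidableEq ι] (s : Finset ι) (f : ι → ℂ)
    (hf : ∀ i ∈ s, f i ≠ 0) :
    ∑ i ∈ s, ∏ k ∈ s.erase i, f k = (∏ k ∈ s, f k) * ∑ i ∈ s, 1 / f i := by
  rw [Finset.mul_sum]
  refine Finset.sum_congr rfl fun i hi => ?_
  rw [← Finset.mul_prod_erase s f hi]
  field_simp [hf i hi]

theorem nu_aux_a (n : ℕ) (g c ν : Fin n → ℂ)
    (hpoly : ∀ X : ℂ, ∏ r, (ν r - X) =
        ∏ r, (g r - X) - ∑ r, c r * ∏ k ∈ univ.erase r, (g k - X)) :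
    ∑ r, ν r = ∑ r, g r - ∑ r, c r := by
  have key : ∀ Y : ℂ, ∏ r, (1 - ν r * Y) =
      ∏ r, (1 - g r * Y) + Y * ∑ r, c r * ∏ k ∈ univ.erase r, (1 - g k * Y) := by
    intro Y
    by_cases hY : Y = 0
    · simp [hY]
    have e : ∀ a : ℂ, 1 - a * Y = (-Y) * (a - Y⁻¹) := by
      intro a; field_simp; ring
    simp only [e, Finset.prod_mul_distrib (f := fun _ => -Y)]
    rw [hpoly, mul_sub, sub_eq_add_neg, Finset.mul_sum, Finset.mul_sum, ← Finset.sum_neg_distrib]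
    congr 1
    refine Finset.sum_congr rfl fun r _ => ?_
    rw [← Finset.mul_prod_erase univ (fun _ => -Y) (Finset.mem_univ r)]
    ring
  have d1 := hasDerivAt_prod_lin univ (fun _ => 1) ν 0
  have d2 := hasDerivAt_prod_lin univ (fun _ => 1) g 0
  have d3 : HasDerivAt (fun Y : ℂ => ∑ r, c r * ∏ k ∈ univ.erase r, (1 - g k * Y)) _ 0 :=
    HasDerivAt.fun_sum fun r _ => (hasDerivAt_prod_lin (univ.erase r) (fun _ => 1) g 0).const_mul (c r)
  have d4 := d2.add ((hasDerivAt_id (0 : ℂ)).mul d3)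
  have hfun : (fun Y : ℂ => ∏ r, (1 - ν r * Y)) = _ := funext key
  rw [hfun] at d1
  have := d1.unique d4
  simp at this
  linear_combination -this

theorem nu_aux_b (n : ℕ) (g c ν : Fin n → ℂ) (hg : Function.Injective g) (hc : ∀ r, c r ≠ 0)
    (hpoly : ∀ X : ℂ, ∏ r, (ν r - X) =
        ∏ r, (g r - X) - ∑ r, c r * ∏ k ∈ univ.erase r, (g k - X)) (j : Fin n) :
    ∑ i, c j / (ν i - g j) = ∑ r ∈ univ.erase j, c r / (g r - g j)
      + ∑ i ∈ univ.erase j, c j / (g i - g j) - 1 := by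
  have hne : ∀ k ∈ univ.erase j, g k - g j ≠ 0 := fun k hk =>
    sub_ne_zero.2 fun h => (Finset.mem_erase.1 hk).1 (hg h)
  set Q : ℂ := ∏ k ∈ univ.erase j, (g k - g j) with hQ
  have hQ0 : Q ≠ 0 := Finset.prod_ne_zero_iff.2 hne
  have hval : ∏ r, (ν r - g j) = -(c j * Q) := by
    rw [hpoly, Finset.prod_eq_zero (Finset.mem_univ j) (sub_self _), zero_sub,
      Finset.sum_eq_single_of_mem j (Finset.mem_univ j)]
    intro r _ hr
    rw [Finset.prod_eq_zero (Finset.mem_erase.2 ⟨hr.symm, Finset.mem_univ j⟩) (sub_self _),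
      mul_zero]
  have hν : ∀ i ∈ (univ : Finset (Fin n)), ν i - g j ≠ 0 := by
    apply Finset.prod_ne_zero_iff.1
    rw [hval]
    exact neg_ne_zero.2 (mul_ne_zero (hc j) hQ0)
  have d1 := hasDerivAt_prod_sub univ ν (g j)
  have d2 := hasDerivAt_prod_sub univ g (g j)
  have d3 : HasDerivAt (fun Y : ℂ => ∑ r, c r * ∏ k ∈ univ.erase r, (g k - Y)) _ (g j) :=
    HasDerivAt.fun_sum fun r _ => (hasDerivAt_prod_sub (univ.erase r) g (g j)).const_mul (c r)
  have hfun : (fun Y : ℂ => ∏ r, (ν r - Y)) = _ := funext hpoly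
  rw [hfun] at d1
  have h := d1.unique (d2.sub d3)
  rw [sum_prod_erase_div _ _ hν, hval, sum_prod_erase_vanish _ _ _ (Finset.mem_univ j),
    ← Finset.add_sum_erase univ (fun r => c r * -∑ i ∈ univ.erase r, ∏ k ∈ (univ.erase r).erase i, (g k - g j))
      (Finset.mem_univ j), sum_prod_erase_div _ _ hne, ← hQ] at h
  have h5 : ∑ r ∈ univ.erase j, c r * -∑ i ∈ univ.erase r, ∏ k ∈ (univ.erase r).erase i, (g k - g j)
      = -(Q * ∑ r ∈ univ.erase j, c r / (g r - g j)) := by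
    rw [Finset.mul_sum, ← Finset.sum_neg_distrib]
    refine Finset.sum_congr rfl fun r hr => ?_
    rw [sum_prod_erase_vanish _ _ _
      (Finset.mem_erase.2 ⟨(Finset.mem_erase.1 hr).1.symm, Finset.mem_univ j⟩),
      Finset.erase_right_comm, hQ, ← Finset.mul_prod_erase _ _ hr]
    have := hne r hr
    field_simp
  rw [h5] at h
  have e : ∀ (s : Finset (Fin n)) (f : Fin n → ℂ), ∑ i ∈ s, c j / f i = c j * ∑ i ∈ s, 1 / f i := by
    intro s f
    rw [Finset.mul_sum]
    exact Finset.sum_congr rfl fun i _ => by ring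
  rw [e, e]
  apply mul_left_cancel₀ hQ0
  linear_combination h

/-- Lemma 7 (eq:sum_gamma_nus and eq:sum_inv_nu_minus_gamma): if `ν₁,…,ν_{M̄}` are the roots
(with multiplicity) of `1 = Σ_r κ̃_r·γ_r/(γ_r − ν)`, characterized by the polynomial identity
`∏_r (ν_r − X) = ∏_r (γ_r − X) − Σ_r κ̃_r·γ_r·∏_{k≠r} (γ_k − X)`, then
(a) `Σ_r ν_r = Σ_r γ_r − Σ_r κ̃_r·γ_r`, and
(b) for every `j`,
`Σ_i κ̃_j·γ_j/(ν_i − γ_j) = Σ_{r≠j} κ̃_r·γ_r/(γ_r − γ_j) + Σ_{i≠j} κ̃_j·γ_j/(γ_i − γ_j) − 1`. -/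
theorem nu_root_sum_identities (Mbar : ℕ) (γ κtil : Fin Mbar → ℝ)
    (hγpos : ∀ m, 0 < γ m) (hγmono : StrictMono γ) (hκ : ∀ m, 0 < κtil m)
    (ν : Fin Mbar → ℂ)
    (hpoly : ∀ X : ℂ,
      ∏ r, (ν r - X) =
        ∏ r, ((γ r : ℂ) - X) -
          ∑ r, (κtil r : ℂ) * (γ r : ℂ) * ∏ k ∈ univ.erase r, ((γ k : ℂ) - X)) :
    (∑ r, ν r = ∑ r, (γ r : ℂ) - ∑ r, (κtil r : ℂ) * (γ r : ℂ)) ∧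
    (∀ j : Fin Mbar,
      ∑ i, (κtil j : ℂ) * (γ j : ℂ) / (ν i - (γ j : ℂ))
        = ∑ r ∈ univ.erase j, (κtil r : ℂ) * (γ r : ℂ) / ((γ r : ℂ) - (γ j : ℂ))
          + ∑ i ∈ univ.erase j, (κtil j : ℂ) * (γ j : ℂ) / ((γ i : ℂ) - (γ j : ℂ))
          - 1) := by
  have hc : ∀ r, (κtil r : ℂ) * (γ r : ℂ) ≠ 0 := fun r =>
    mul_ne_zero (Complex.ofReal_ne_zero.2 (hκ r).ne') (Complex.ofReal_ne_zero.2 (hγpos r).ne')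
  have hg : Function.Injective fun r => (γ r : ℂ) :=
    Complex.ofReal_injective.comp hγmono.injective
  exact ⟨nu_aux_a Mbar (fun r => (γ r : ℂ)) (fun r => (κtil r : ℂ) * (γ r : ℂ)) ν hpoly,
    fun j => nu_aux_b Mbar (fun r => (γ r : ℂ)) (fun r => (κtil r : ℂ) * (γ r : ℂ)) ν hg hc hpoly j⟩
end

section
/- Let R be an M×M Hermitian positive definite matrix and let P₁^⊥,…,P_L^⊥ be M×M orthogonal projection matrices, and let N > 0. Define the L×L matrices Γ_C, {Γ_C}_{ℓ,m} = (1/N)·tr[P_ℓ^⊥·R·P_m^⊥·R], and W_P, {W_P}_{ℓ,m} = (1/N)·tr[P_ℓ^⊥·P_m^⊥]. Then Γ_C is Hermitian positive semidefinite and its smallest eigenvalue satisfies λ_min(Γ_C) ≥ λ_min(R)²·λ_min(W_P), where λ_min denotes the smallest eigenvalue. -/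
open scoped BigOperators
open Matrix
open scoped ComplexOrder

lemma sub_smul_one_psd {𝕜 : Type*} [RCLike 𝕜] {n : ℕ} {A : Matrix (Fin n) (Fin n) 𝕜}
    (hA : A.IsHermitian) (c : ℝ) (hc : ∀ i, c ≤ hA.eigenvalues i) :
    (A - (c : 𝕜) • (1 : Matrix (Fin n) (Fin n) 𝕜)).PosSemidef := by
  have hD : (diagonal (fun i => ((hA.eigenvalues i - c : ℝ) : 𝕜))).PosSemidef := by
    apply PosSemidef.diagonal
    intro i
    have := sub_nonneg.2 (hc i)
    exact RCLike.ofReal_nonneg.2 this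
  have h2 := hD.mul_mul_conjTranspose_same (hA.eigenvectorUnitary : Matrix (Fin n) (Fin n) 𝕜)
  convert h2 using 1
  have hd : (diagonal (fun i => ((hA.eigenvalues i - c : ℝ) : 𝕜)))
      = diagonal (RCLike.ofReal ∘ hA.eigenvalues) - (c : 𝕜) • 1 := by
    ext i j
    by_cases h : i = j
    · subst h; simp [Algebra.algebraMap_eq_smul_one, sub_smul]
    · simp [h]
  have hU : (hA.eigenvectorUnitary : Matrix (Fin n) (Fin n) 𝕜) *
      (hA.eigenvectorUnitary : Matrix (Fin n) (Fin n) 𝕜)ᴴ = 1 :=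
    Unitary.coe_mul_star_self hA.eigenvectorUnitary
  rw [hd, mul_sub, sub_mul]
  congr 1
  · conv_lhs => rw [hA.spectral_theorem]
    rw [Unitary.conjStarAlgAut_apply]
    rfl
  · simp [hU]

lemma trace_herm_sq_nonneg {n : ℕ} {X : Matrix (Fin n) (Fin n) ℂ} (hX : X.IsHermitian) :
    0 ≤ (trace (X * X)).re := by
  have h := (posSemidef_conjTranspose_mul_self X).trace_nonneg
  rw [hX.eq] at h
  exact (Complex.le_def.1 h).1

open scoped MatrixOrder in
lemma psd_factor {n : ℕ} {S : Matrix (Fin n) (Fin n) ℂ} (hS : S.PosSemidef) :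
    ∃ B : Matrix (Fin n) (Fin n) ℂ, S = Bᴴ * B :=
  CStarAlgebra.nonneg_iff_eq_star_mul_self.1 hS.nonneg

lemma trace_bound {n : ℕ} {X S : Matrix (Fin n) (Fin n) ℂ} (hX : X.IsHermitian)
    (hS : S.PosSemidef) (c : ℝ) (hc : 0 ≤ c) :
    c ^ 2 * (trace (X * X)).re ≤
      (trace (X * (S + (c : ℂ) • 1) * X * (S + (c : ℂ) • 1))).re := by
  have h1 : 0 ≤ (trace (X * X * S)).re := by
    have h := (hS.mul_mul_conjTranspose_same X).trace_nonneg
    rw [hX.eq, trace_mul_comm, ← Matrix.mul_assoc] at h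
    exact (Complex.le_def.1 h).1
  have h2 : 0 ≤ (trace (X * S * X * S)).re := by
    obtain ⟨B, rfl⟩ := psd_factor hS
    have hY : (B * X * Bᴴ).IsHermitian := isHermitian_mul_mul_conjTranspose B hX
    have h := trace_herm_sq_nonneg hY
    have e : trace (X * (Bᴴ * B) * X * (Bᴴ * B)) = trace (B * X * Bᴴ * (B * X * Bᴴ)) := by
      rw [← Matrix.mul_assoc, trace_mul_comm]
      simp only [Matrix.mul_assoc]
    rw [e]; exact h
  have e : trace (X * (S + (c : ℂ) • 1) * X * (S + (c : ℂ) • 1)) =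
      trace (X * S * X * S) + ((2 * c : ℝ) : ℂ) * trace (X * X * S)
        + ((c ^ 2 : ℝ) : ℂ) * trace (X * X) := by
    have h3 : trace (X * S * X) = trace (X * X * S) := by
      rw [trace_mul_comm, ← Matrix.mul_assoc]
    simp only [mul_add, add_mul, Matrix.mul_smul, Matrix.smul_mul, Matrix.mul_one, trace_add,
      trace_smul, smul_eq_mul, h3]
    push_cast
    ring
  rw [e, Complex.add_re, Complex.add_re, Complex.re_ofReal_mul, Complex.re_ofReal_mul]
  have := mul_nonneg hc h1
  linarith

lemma quad_form {n L : ℕ} (P : Fin L → Matrix (Fin n) (Fin n) ℂ)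
    (Q : Matrix (Fin n) (Fin n) ℂ) (N : ℝ) (G : Matrix (Fin L) (Fin L) ℝ)
    (hG : ∀ l m, G l m = (1 / N) * (trace (P l * Q * P m * Q)).re) (x : Fin L → ℝ) :
    star x ⬝ᵥ (G *ᵥ x) = (1 / N) *
      (trace ((∑ l, (x l : ℂ) • P l) * Q * (∑ l, (x l : ℂ) • P l) * Q)).re := by
  simp only [Finset.sum_mul, Finset.mul_sum, trace_sum, Complex.re_sum, Matrix.mul_smul,
    Matrix.smul_mul, trace_smul, smul_eq_mul, dotProduct, mulVec, hG, Complex.re_ofReal_mul,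
    Pi.star_apply, star_trivial]
  rw [Finset.sum_comm]
  refine Finset.sum_congr rfl fun i _ => Finset.sum_congr rfl fun j _ => ?_
  ring

/-- The asymptotic CML covariance matrix `Γ_C`, with entries
`(1/N)·tr[P_ℓ^⊥ R P_m^⊥ R]`, is positive semidefinite and its smallest eigenvalue is at least
`λ_min(R)²·λ_min(W_P)`, where `{W_P}_{ℓ,m} = (1/N)·tr[P_ℓ^⊥ P_m^⊥]`. -/
theorem GammaC_posdef_lower_bound (Mdim L : ℕ) (hM : 0 < Mdim) (hL : 0 < L)
    (R : Matrix (Fin Mdim) (Fin Mdim) ℂ) (hR : R.PosDef)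
    (P : Fin L → Matrix (Fin Mdim) (Fin Mdim) ℂ)
    (hPproj : ∀ ℓ, (P ℓ).IsHermitian ∧ P ℓ * P ℓ = P ℓ)
    (N : ℝ) (hN : 0 < N)
    (ΓC WP : Matrix (Fin L) (Fin L) ℝ)
    (hΓC : ∀ ℓ m, ΓC ℓ m = (1 / N) * (Matrix.trace (P ℓ * R * P m * R)).re)
    (hWP : ∀ ℓ m, WP ℓ m = (1 / N) * (Matrix.trace (P ℓ * P m)).re) :
    ΓC.PosSemidef ∧
    ∀ (hΓh : ΓC.IsHermitian) (hWh : WP.IsHermitian),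
      (⨅ i, hR.1.eigenvalues i) ^ 2 * ⨅ i, hWh.eigenvalues i ≤ ⨅ i, hΓh.eigenvalues i := by
  haveI : Nonempty (Fin L) := ⟨⟨0, hL⟩⟩
  set c : ℝ := ⨅ i, hR.1.eigenvalues i with hcdef
  have hc0 : 0 ≤ c := Real.iInf_nonneg fun i => (hR.eigenvalues_pos i).le
  have hS := sub_smul_one_psd hR.1 c fun i => ciInf_le (Set.finite_range _).bddBelow i
  have hXh : ∀ x : Fin L → ℝ, (∑ l, (x l : ℂ) • P l).IsHermitian := by
    intro x
    simp only [IsHermitian, conjTranspose_sum, conjTranspose_smul, (hPproj _).1.eq]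
    simp
  have hW0 : ∀ x : Fin L → ℝ, star x ⬝ᵥ (WP *ᵥ x) = (1 / N) *
      (trace ((∑ l, (x l : ℂ) • P l) * (∑ l, (x l : ℂ) • P l))).re := by
    intro x
    have := quad_form P 1 N WP (by simpa using hWP) x
    simpa using this
  have key : ∀ x : Fin L → ℝ,
      c ^ 2 * (star x ⬝ᵥ (WP *ᵥ x)) ≤ star x ⬝ᵥ (ΓC *ᵥ x) := by
    intro x
    rw [hW0, quad_form P R N ΓC hΓC x]
    have h := trace_bound (hXh x) hS c hc0
    have e : R - (c : ℂ) • (1 : Matrix (Fin Mdim) (Fin Mdim) ℂ) + (c : ℂ) • 1 = R :=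
      sub_add_cancel _ _
    have h' := mul_le_mul_of_nonneg_left h (one_div_pos.2 hN).le
    erw [e] at h'
    linarith
  refine ⟨PosSemidef.of_dotProduct_mulVec_nonneg ?_ ?_, ?_⟩
  · ext i j
    rw [conjTranspose_apply, star_trivial, hΓC, hΓC, Matrix.mul_assoc (P j * R),
      trace_mul_comm, ← Matrix.mul_assoc]
  · intro x
    refine le_trans ?_ (key x)
    rw [hW0]
    have := trace_herm_sq_nonneg (hXh x)
    positivity
  · intro hΓh hWh
    refine le_ciInf fun i => ?_
    have hT := sub_smul_one_psd hWh (⨅ i, hWh.eigenvalues i)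
      fun i => ciInf_le (Set.finite_range _).bddBelow i
    have h1 := hT.dotProduct_mulVec_nonneg (hΓh.eigenvectorBasis i).ofLp
    have hn : star (hΓh.eigenvectorBasis i).ofLp ⬝ᵥ (hΓh.eigenvectorBasis i).ofLp = 1 := by
      have := hΓh.eigenvectorBasis.orthonormal.1 i
      have h2 := real_inner_self_eq_norm_sq (hΓh.eigenvectorBasis i)
      rw [this, EuclideanSpace.inner_eq_star_dotProduct, dotProduct_comm] at h2
      simpa using h2
    rw [sub_mulVec, dotProduct_sub, smul_mulVec, one_mulVec, dotProduct_smul, hn] at h1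
    have h3 := key (hΓh.eigenvectorBasis i).ofLp
    have h4 := hΓh.eigenvalues_eq i
    simp only [RCLike.re_to_real] at h4
    rw [h4]
    refine le_trans (mul_le_mul_of_nonneg_left ?_ (sq_nonneg c)) h3
    simpa using h1
end

section
/- Let M > K ≥ 1 be integers, T a real number, and α₁ ≤ α₂ ≤ … ≤ α_K nonnegative reals with Σ_{i=1}^{K} α_i ≤ T. For 1 ≤ k ≤ K define σ_k² = (T − Σ_{i=K−k+1}^{K} α_i)/(M − k). If for some m ∈ {1,…,K} the inequality α_{K−m+1} > σ_m² holds, then α_{K−k+1} > σ_k² holds for every integer k with 1 ≤ k ≤ m. -/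
open scoped BigOperators
open Finset

/-- If the `m` largest of the ordered values `α₁ ≤ … ≤ α_K` all exceed the noise-power
estimate `σ_m² = (T − Σ_{i=K−m+1}^{K} α_i)/(M − m)` — equivalently `α_{K−m+1} > σ_m²` —
then the same holds for every index `k` with `1 ≤ k ≤ m`. -/
theorem eigenvalue_threshold_monotone (M K : ℕ) (hK : 0 < K) (hKM : K < M)
    (T : ℝ) (α : Fin K → ℝ) (hmono : Monotone α) (hnonneg : ∀ i, 0 ≤ α i)
    (hsum : ∑ i, α i ≤ T)
    (σsq : ℕ → ℝ)
    (hσ : ∀ k, σsq k =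
      (T - ∑ i ∈ univ.filter (fun i : Fin K => K - k ≤ (i : ℕ)), α i) / ((M : ℝ) - k))
    (m : ℕ) (hm : 0 < m) (hmK : m ≤ K)
    (h : σsq m < α ⟨K - m, Nat.sub_lt hK hm⟩) :
    ∀ k : ℕ, (hk : 0 < k) → k ≤ m → σsq k < α ⟨K - k, Nat.sub_lt hK hk⟩ := by
  have step : ∀ k : ℕ, (hk : 0 < k) → k + 1 ≤ K →
      σsq (k + 1) < α ⟨K - (k + 1), Nat.sub_lt hK (Nat.succ_pos k)⟩ →
      σsq k < α ⟨K - k, Nat.sub_lt hK hk⟩ := by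
    intro k hk hkK hlt
    have hle : α ⟨K - (k + 1), Nat.sub_lt hK (Nat.succ_pos k)⟩
        ≤ α ⟨K - k, Nat.sub_lt hK hk⟩ := hmono (by simp only [Fin.mk_le_mk]; omega)
    have hS : univ.filter (fun i : Fin K => K - (k + 1) ≤ (i : ℕ)) =
        insert ⟨K - (k + 1), Nat.sub_lt hK (Nat.succ_pos k)⟩
          (univ.filter (fun i : Fin K => K - k ≤ (i : ℕ))) := by
      ext i
      simp only [mem_filter, mem_univ, true_and, mem_insert, Fin.ext_iff]
      omega
    have hM : (k : ℝ) + 1 < M := by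
      have : k + 1 < M := by omega
      exact_mod_cast this
    rw [hσ, hS, sum_insert (by simp only [mem_filter, mem_univ, true_and]; omega),
      Nat.cast_add, Nat.cast_one, div_lt_iff₀ (by linarith)] at hlt
    rw [hσ, div_lt_iff₀ (by linarith)]
    have h2 := mul_le_mul_of_nonneg_right hle (show (0 : ℝ) ≤ (M : ℝ) - k by linarith)
    linarith
  intro k hk hkm
  induction m, hkm using Nat.le_induction with
  | base => exact h
  | succ n hn ih => exact ih (by omega) (by omega) (step n (by omega) hmK h)
end
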